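/- arXiv:2512.19044 — 4 statements merged into one kernel-verified Lean document; each statement's English description precedes it below -/
import Mathlib

section
/- Let G be a graph that has a region representation v ↦ H_v over a graph H that is 3-acyclic. If K is a finite clique of G, then the subtrees H_v for v ∈ K have a common vertex, i.e., ⋂_{v∈K} H_v is nonempty. -/
open SimpleGraph

/-- A region representation of `G` over `H`: each vertex gets a nonempty connected
subgraph (region) of `H`, and two distinct vertices are adjacent in `G` iff their
regions share a vertex. -/
def IsRegionRep {V W : Type*} (G : SimpleGraph V) (H : SimpleGraph W)
    (f : V → H.Subgraph) : Prop :=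
  (∀ v, (f v).Connected) ∧
  ∀ u v : V, u ≠ v → (G.Adj u v ↔ ((f u).verts ∩ (f v).verts).Nonempty)

/-- The representation is `r`-acyclic: the union of the regions of any at most `r`
vertices is acyclic. -/
def RepAcyclic {V W : Type*} (H : SimpleGraph W) (f : V → H.Subgraph) (r : ℕ) : Prop :=
  ∀ X : Finset V, X.card ≤ r → (⨆ x ∈ X, f x).coe.IsAcyclic

/-! Two connected subgraphs whose union is acyclic have a connected intersection, by uniqueness of
paths. If three connected subgraphs `A`, `B`, `C` with acyclic union meet pairwise, then
`(A ⊔ B) ⊓ C = (A ⊓ C) ⊔ (B ⊓ C)` is therefore connected; a connected union of two nonempty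
subgraphs has overlapping parts, so `A`, `B`, `C` have a common vertex. For more regions, remove one
and intersect all others with it: the smaller regions are still connected and, by the case of three,
still meet pairwise. -/

section Subgraph

variable {W : Type*} {H : SimpleGraph W} {A B C : H.Subgraph}

theorem coe_isAcyclic_of_le (hAB : A ≤ B) (hB : B.coe.IsAcyclic) : A.coe.IsAcyclic :=
  hB.comap (Subgraph.inclusion hAB) (Subgraph.inclusion.injective hAB)

theorem map_hom_map_inclusion (hAB : A ≤ B) {u v : A.verts} (p : A.coe.Walk u v) :
    (p.map (Subgraph.inclusion hAB)).map B.hom = p.map A.hom :=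
  Walk.map_map (Subgraph.inclusion hAB) B.hom p

theorem toSubgraph_map_hom_le {u v : A.verts} (p : A.coe.Walk u v) :
    (p.map A.hom).toSubgraph ≤ A := by
  rw [Walk.toSubgraph_map]
  exact Subgraph.coeSubgraph_le p.toSubgraph

theorem preconnected_inf_of_isAcyclic_sup (hA : A.Preconnected) (hB : B.Preconnected)
    (hAB : (A ⊔ B).coe.IsAcyclic) : (A ⊓ B).Preconnected := by
  rw [Subgraph.preconnected_iff_forall_exists_walk_subgraph]
  intro u v hu hv
  obtain ⟨p, hp⟩ := (hA ⟨u, hu.1⟩ ⟨v, hv.1⟩).exists_isPath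
  obtain ⟨q, hq⟩ := (hB ⟨u, hu.2⟩ ⟨v, hv.2⟩).exists_isPath
  have hle_A : A ≤ A ⊔ B := le_sup_left
  have hle_B : B ≤ A ⊔ B := le_sup_right
  have hpA : (p.map (Subgraph.inclusion hle_A)).IsPath := hp.map (Subgraph.inclusion.injective _)
  have hqB : (q.map (Subgraph.inclusion hle_B)).IsPath := hq.map (Subgraph.inclusion.injective _)
  have hpq : p.map (Subgraph.inclusion hle_A) = q.map (Subgraph.inclusion hle_B) :=
    congrArg Subtype.val ((hAB.subsingleton_path _ _).elim ⟨_, hpA⟩ ⟨_, hqB⟩)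
  have hpq' : p.map A.hom = q.map B.hom :=
    (map_hom_map_inclusion hle_A p).symm.trans <|
      (congrArg (Walk.map (A ⊔ B).hom) hpq).trans (map_hom_map_inclusion hle_B q)
  exact ⟨p.map A.hom, le_inf (toSubgraph_map_hom_le p) (hpq' ▸ toSubgraph_map_hom_le q)⟩

theorem inf_verts_nonempty_of_preconnected_sup (hAB : (A ⊔ B).Preconnected)
    (hA : A.verts.Nonempty) (hB : B.verts.Nonempty) : (A ⊓ B).verts.Nonempty := by
  obtain ⟨a, ha⟩ := hA
  obtain ⟨b, hb⟩ := hB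
  by_cases hbA : b ∈ A.verts
  · exact ⟨b, hbA, hb⟩
  obtain ⟨p⟩ := hAB ⟨a, Or.inl ha⟩ ⟨b, Or.inr hb⟩
  obtain ⟨⟨⟨x, y⟩, hxy⟩, -, hxA, hyA⟩ := p.exists_boundary_dart (Subtype.val ⁻¹' A.verts) ha hbA
  rcases Subgraph.sup_adj.1 hxy with hxy | hxy
  · exact absurd hxy.snd_mem hyA
  · exact ⟨x, hxA, hxy.fst_mem⟩

theorem inf_inf_verts_nonempty_of_isAcyclic_sup (hA : A.Preconnected) (hB : B.Preconnected)
    (hC : C.Preconnected) (hABC : (A ⊔ B ⊔ C).coe.IsAcyclic) (hAB : (A ⊓ B).verts.Nonempty)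
    (hAC : (A ⊓ C).verts.Nonempty) (hBC : (B ⊓ C).verts.Nonempty) :
    (A ⊓ B ⊓ C).verts.Nonempty := by
  have hsup : (A ⊔ B).Preconnected := (Subgraph.connected_sup hA hB hAB).preconnected
  have hinf : ((A ⊔ B) ⊓ C).Preconnected := preconnected_inf_of_isAcyclic_sup hsup hC hABC
  rw [inf_sup_right] at hinf
  rw [inf_inf_distrib_right]
  exact inf_verts_nonempty_of_preconnected_sup hinf hAC hBC

theorem exists_forall_mem_verts_of_pairwise_inf_verts_nonempty {ι : Type*} {s : Finset ι}
    (hs : s.Nonempty) {f : ι → H.Subgraph} (hconn : ∀ i ∈ s, (f i).Connected)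
    (hacyc : ∀ i ∈ s, ∀ j ∈ s, ∀ k ∈ s, (f i ⊔ f j ⊔ f k).coe.IsAcyclic)
    (hmeet : (s : Set ι).Pairwise fun i j ↦ (f i ⊓ f j).verts.Nonempty) :
    ∃ t, ∀ i ∈ s, t ∈ (f i).verts := by
  induction hs using Finset.Nonempty.cons_induction generalizing f with
  | singleton a => simpa [Set.Nonempty] using (hconn a (Finset.mem_singleton_self a)).nonempty
  | cons a s ha hs ih =>
    have has : a ∈ s.cons a ha := Finset.mem_cons_self a s
    have hsub : ∀ i ∈ s, i ∈ s.cons a ha := fun i hi ↦ Finset.mem_cons_of_mem hi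
    have hmeet_a : ∀ i ∈ s, (f i ⊓ f a).verts.Nonempty := fun i hi ↦
      hmeet (hsub i hi) has (ne_of_mem_of_not_mem hi ha)
    have hconn_inf : ∀ i ∈ s, (f i ⊓ f a).Connected := fun i hi ↦
      Subgraph.connected_iff.2 ⟨preconnected_inf_of_isAcyclic_sup (hconn i (hsub i hi)).preconnected
        (hconn a has).preconnected
        (coe_isAcyclic_of_le le_sup_left (hacyc i (hsub i hi) a has a has)), hmeet_a i hi⟩
    have hacyc_inf : ∀ i ∈ s, ∀ j ∈ s, ∀ k ∈ s,
        (f i ⊓ f a ⊔ f j ⊓ f a ⊔ f k ⊓ f a).coe.IsAcyclic := fun i hi j hj k hk ↦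
      coe_isAcyclic_of_le (sup_le_sup (sup_le_sup inf_le_left inf_le_left) inf_le_left)
        (hacyc i (hsub i hi) j (hsub j hj) k (hsub k hk))
    have hmeet_inf : (s : Set ι).Pairwise fun i j ↦
        (f i ⊓ f a ⊓ (f j ⊓ f a)).verts.Nonempty := by
      intro i hi j hj hij
      rw [← inf_inf_distrib_right]
      exact inf_inf_verts_nonempty_of_isAcyclic_sup
        (hconn i (hsub i hi)).preconnected (hconn j (hsub j hj)).preconnected
        (hconn a has).preconnected (hacyc i (hsub i hi) j (hsub j hj) a has)
        (hmeet (hsub i hi) (hsub j hj) hij) (hmeet_a i hi) (hmeet_a j hj)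
    obtain ⟨t, ht⟩ := ih hconn_inf hacyc_inf hmeet_inf
    obtain ⟨b, hb⟩ := hs
    exact ⟨t, Finset.forall_mem_cons ha _ |>.2 ⟨(ht b hb).2, fun i hi ↦ (ht i hi).1⟩⟩

end Subgraph

section RegionRep

variable {V W : Type*} {G : SimpleGraph V} {H : SimpleGraph W} {f : V → H.Subgraph}

theorem IsRegionRep.pairwise_inf_verts_nonempty (hrep : IsRegionRep G H f) {s : Set V}
    (hs : G.IsClique s) : s.Pairwise fun u v ↦ (f u ⊓ f v).verts.Nonempty :=
  fun u hu v hv huv ↦ (hrep.2 u v huv).1 (hs hu hv huv)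

theorem RepAcyclic.isAcyclic_sup_sup (h : RepAcyclic H f 3) (u v w : V) :
    (f u ⊔ f v ⊔ f w).coe.IsAcyclic := by
  classical
  have hsup : ⨆ x ∈ ({u, v, w} : Finset V), f x = f u ⊔ f v ⊔ f w := by
    simp only [Finset.iSup_insert, Finset.iSup_singleton, sup_assoc]
  exact hsup ▸ h {u, v, w} Finset.card_le_three

end RegionRep

/-- if `G` has a 3-acyclic region representation and `K` is a (nonempty)
finite clique of `G`, then the regions of the vertices of `K` have a common vertex. -/
theorem stmt7 {V W : Type*} (G : SimpleGraph V) (H : SimpleGraph W) (f : V → H.Subgraph)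
    (hrep : IsRegionRep G H f) (h3 : RepAcyclic H f 3)
    (K : Finset V) (hK : G.IsClique (↑K : Set V)) (hKne : K.Nonempty) :
    ∃ t : W, ∀ v ∈ K, t ∈ (f v).verts :=
  exists_forall_mem_verts_of_pairwise_inf_verts_nonempty hKne (fun v _ ↦ hrep.1 v)
    (fun u _ v _ w _ ↦ h3.isAcyclic_sup_sup u v w) (hrep.pairwise_inf_verts_nonempty hK)
end

section
/- Let v ↦ H_v be a 3-acyclic region representation of a graph G over a graph H. Then G is chordal if and only if the union ⋃_{v∈V(G)} H_v is acyclic. -/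
open SimpleGraph

/-- A graph is chordal if every cycle of length at least 4 has a chord: an edge of the
graph between two vertices of the cycle that is not an edge of the cycle. -/
def Chordal {V : Type*} (G : SimpleGraph V) : Prop :=
  ∀ (v : V) (w : G.Walk v v), w.IsCycle → 4 ≤ w.length →
    ∃ a b, a ∈ w.support ∧ b ∈ w.support ∧ G.Adj a b ∧ ¬ w.toSubgraph.Adj a b

/-!
A graph is acyclic iff every antisymmetric edge weight is the coboundary of a vertex potential.
Both directions compare the first cohomology of the union of the regions with that of the clique
complex of `G`, whose simplices record which regions pairwise meet.

If all unions of three regions are acyclic, then an edge weight on the total union has a potential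
on each region, and the differences of these potentials on overlaps form a `1`-cocycle on the
cliques of `G`. When `G` is chordal this cocycle is a coboundary, because chords cut a cycle down to
triangles; correcting the local potentials by it glues them to a global one.

Conversely, every clique cocycle of `G` arises in this way from an edge weight on the union, so if
the union is acyclic, clique cocycles are coboundaries. On a triangle-free graph every antisymmetric
weight is a clique cocycle, so a triangle-free graph represented by an acyclic union is itself
acyclic. A chordless cycle of length at least four would induce a triangle-free subgraph violating
this.
-/

section WalkSum

variable {V A : Type*} [AddCommGroup A] {G : SimpleGraph V} {c : V → V → A}

/-- The integral of the `1`-cochain `c` along a walk: the sum of `c x y` over its darts `(x, y)`. -/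
def walkSum (c : V → V → A) {u v : V} (p : G.Walk u v) : A :=
  (p.darts.map fun d => c d.fst d.snd).sum

@[simp]
lemma walkSum_nil (u : V) : walkSum c (Walk.nil : G.Walk u u) = 0 := by
  simp [walkSum]

@[simp]
lemma walkSum_cons {u v w : V} (h : G.Adj u v) (p : G.Walk v w) :
    walkSum c (Walk.cons h p) = c u v + walkSum c p := by
  simp [walkSum]

@[simp]
lemma walkSum_append {u v w : V} (p : G.Walk u v) (q : G.Walk v w) :
    walkSum c (p.append q) = walkSum c p + walkSum c q := by
  simp [walkSum]

lemma walkSum_rotate [DecidableEq V] {u v : V} (p : G.Walk v v) (h : u ∈ p.support) :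
    walkSum c (p.rotate u h) = walkSum c p :=
  ((p.rotate_darts u h).perm.map _).sum_eq

lemma walkSum_bypass [DecidableEq V] {u v : V} (p : G.Walk u v)
    (hclosed : ∀ ⦃x : V⦄ (w : G.Walk x x), w.length ≤ p.length → walkSum c w = 0) :
    walkSum c p.bypass = walkSum c p := by
  induction p with
  | nil => rfl
  | @cons u v w h p ih =>
    have hbypass : walkSum c p.bypass = walkSum c p :=
      ih fun x w hw => hclosed w (hw.trans (by simp))
    rw [Walk.bypass]
    split_ifs with hu
    · have hloop : walkSum c (Walk.cons h (p.bypass.takeUntil u hu)) = 0 := by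
        refine hclosed _ ?_
        have := p.bypass.length_takeUntil_le_length hu
        have := p.length_bypass_le_length
        simp only [Walk.length_cons]
        lia
      have hsplit := congrArg (walkSum c) (p.bypass.take_spec hu)
      simp only [walkSum_append, walkSum_cons] at hsplit hloop ⊢
      rw [← hbypass, ← hsplit, ← add_assoc, hloop, zero_add]
    · rw [walkSum_cons, walkSum_cons, hbypass]

lemma walkSum_eq_zero_of_length_lt_three (hanti : ∀ ⦃u v⦄, G.Adj u v → c v u = -c u v) {v : V}
    (w : G.Walk v v) (hw : w.length < 3) : walkSum c w = 0 := by
  match w with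
  | .nil => simp
  | .cons h .nil => exact (h.ne rfl).elim
  | .cons h (.cons _ .nil) => simp [hanti h]

lemma walkSum_eq_zero_of_isCycle (hanti : ∀ ⦃u v⦄, G.Adj u v → c v u = -c u v)
    (hcycle : ∀ ⦃v⦄ (w : G.Walk v v), w.IsCycle →
      (∀ ⦃x⦄ (w' : G.Walk x x), w'.length < w.length → walkSum c w' = 0) → walkSum c w = 0)
    ⦃v : V⦄ (w : G.Walk v v) : walkSum c w = 0 := by
  classical
  induction hn : w.length using Nat.strong_induction_on generalizing v w with
  | _ n ih =>
  subst hn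
  cases w with
  | nil => simp
  | @cons _ u _ h p =>
    have hbypass : walkSum c p.bypass = walkSum c p :=
      walkSum_bypass p fun x w' hw' => ih w'.length (by simpa [Nat.lt_succ_iff]) w' rfl
    have hlength : p.bypass.length ≤ p.length := p.length_bypass_le_length
    rw [walkSum_cons, ← hbypass, ← walkSum_cons h]
    by_cases h3 : 3 ≤ (Walk.cons h p.bypass).length
    · refine hcycle _ ?_ fun x w' hw' => ih w'.length ?_ w' rfl
      · exact Walk.isCycle_iff_isPath_tail_and_le_length.2 ⟨by simpa using p.bypass_isPath, h3⟩
      · simp only [Walk.length_cons] at hw' ⊢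
        lia
    · exact walkSum_eq_zero_of_length_lt_three hanti _ (not_le.1 h3)

lemma walkSum_eq_of_forall_closed (hclosed : ∀ ⦃x : V⦄ (w : G.Walk x x), walkSum c w = 0)
    {u v : V} (p q : G.Walk u v) : walkSum c p = walkSum c q := by
  have hp := hclosed (p.append q.reverse)
  have hq := hclosed (q.append q.reverse)
  rw [walkSum_append] at hp hq
  exact add_right_cancel (hp.trans hq.symm)

end WalkSum

section Potential

variable {V A : Type*} [AddCommGroup A] {G : SimpleGraph V} {c : V → V → A}

/-- `g` is a potential of the `1`-cochain `c` on `G`: the coboundary of `g` is `c` on every edge.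
The values of `c` at non-adjacent pairs are irrelevant. -/
def IsPotential (G : SimpleGraph V) (c : V → V → A) (g : V → A) : Prop :=
  ∀ ⦃u v⦄, G.Adj u v → g v - g u = c u v

lemma IsPotential.mono {G' : SimpleGraph V} {g : V → A} (hg : IsPotential G c g) (hle : G' ≤ G) :
    IsPotential G' c g :=
  fun _ _ h => hg (hle h)

lemma IsPotential.antisymm {g : V → A} (hg : IsPotential G c g) {u v : V} (h : G.Adj u v) :
    c v u = -c u v := by
  rw [← hg h, ← hg h.symm, neg_sub]

lemma IsPotential.sub_eq_sub_of_reachable {g g' : V → A} (hg : IsPotential G c g)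
    (hg' : IsPotential G c g') {u v : V} (huv : G.Reachable u v) : g u - g' u = g v - g' v := by
  obtain ⟨p⟩ := huv
  induction p with
  | nil => rfl
  | cons h p ih =>
    rw [← ih, sub_eq_sub_iff_sub_eq_sub, ← neg_sub, hg h, ← hg' h, neg_sub]

lemma exists_isPotential_of_forall_closed
    (hclosed : ∀ ⦃v⦄ (w : G.Walk v v), walkSum c w = 0) : ∃ g : V → A, IsPotential G c g := by
  let root (v : V) : V := (G.connectedComponentMk v).out
  have hroot (v : V) : G.Reachable (root v) v :=
    ConnectedComponent.exact (Quot.out_eq (G.connectedComponentMk v))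
  refine ⟨fun v => walkSum c (hroot v).some, fun u v h => ?_⟩
  have path_independence : ∀ {a b : V} (_ : a = b) (p : G.Walk a u) (q : G.Walk b v),
      walkSum c q - walkSum c p = c u v := by
    rintro a _ rfl p q
    rw [walkSum_eq_of_forall_closed hclosed q (p.append (Walk.cons h Walk.nil))]
    simp
  refine path_independence ?_ _ _
  simp only [root, ConnectedComponent.sound h.reachable]

lemma exists_isPotential_of_isAcyclic (hG : G.IsAcyclic)
    (hanti : ∀ ⦃u v⦄, G.Adj u v → c v u = -c u v) : ∃ g : V → A, IsPotential G c g :=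
  exists_isPotential_of_forall_closed <|
    walkSum_eq_zero_of_isCycle hanti fun _ w hw _ => (hG w hw).elim

-- A potential of the indicator of one edge is constant off that edge but jumps along it.
lemma isAcyclic_of_forall_exists_isPotential
    (hG : ∀ c : V → V → ℤ, (∀ u v, c v u = -c u v) → ∃ g, IsPotential G c g) :
    G.IsAcyclic := by
  classical
  rw [isAcyclic_iff_forall_adj_isBridge]
  intro u v huv
  rw [isBridge_iff]
  intro hreach
  let c (x y : V) : ℤ :=
    (if x = u ∧ y = v then 1 else 0) - (if x = v ∧ y = u then 1 else 0)
  obtain ⟨g, hg⟩ := hG c fun x y => by simp only [c, neg_sub, and_comm]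
  have hzero : IsPotential (G.deleteEdges {s(u, v)}) c 0 := by
    intro x y hxy
    have hne : s(x, y) ≠ s(u, v) := by simpa using (deleteEdges_adj.1 hxy).2
    have hxy' : ¬(x = u ∧ y = v) ∧ ¬(x = v ∧ y = u) := by simpa using hne
    simp [c, hxy'.1, hxy'.2]
  have hconst := (hg.mono (deleteEdges_le _)).sub_eq_sub_of_reachable hzero hreach
  have hjump : g v - g u = 1 := by simpa [c, huv.ne] using hg huv
  simp only [Pi.zero_apply, sub_zero] at hconst
  lia

end Potential

section CliqueCocycle

variable {V A : Type*} [AddCommGroup A] {G : SimpleGraph V} {c : V → V → A}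

/-- `c` is a `1`-cocycle of the clique complex of `G`. The vertices `u`, `v`, `w` may coincide, so
that antisymmetry on edges and vanishing on the diagonal are included. -/
def IsCliqueCocycle (G : SimpleGraph V) (c : V → V → A) : Prop :=
  ∀ ⦃u v w⦄, G.IsClique {u, v, w} → c u v + c v w = c u w

lemma IsCliqueCocycle.self_eq_zero (hc : IsCliqueCocycle G c) (v : V) : c v v = 0 := by
  simpa using hc (u := v) (v := v) (w := v) (by simp)

lemma IsCliqueCocycle.antisymm (hc : IsCliqueCocycle G c) {u v : V} (h : G.Adj u v) :
    c v u = -c u v := by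
  have huvu := hc (u := u) (v := v) (w := u) (by simp [h.symm])
  rw [hc.self_eq_zero] at huvu
  exact eq_neg_of_add_eq_zero_right huvu

lemma isCliqueCocycle_of_cliqueFree_three (hG : G.CliqueFree 3) (hself : ∀ v, c v v = 0)
    (hanti : ∀ u v, c v u = -c u v) : IsCliqueCocycle G c := by
  classical
  intro u v w huvw
  rcases eq_or_ne u v with rfl | huv
  · rw [hself, zero_add]
  rcases eq_or_ne v w with rfl | hvw
  · rw [hself, add_zero]
  rcases eq_or_ne u w with rfl | huw
  · rw [hanti u v, add_neg_cancel, hself]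
  refine (hG {u, v, w} (is3Clique_triple_iff.2 ⟨?_, ?_, ?_⟩)).elim
  · exact huvw (by simp) (by simp) huv
  · exact huvw (by simp) (by simp) huw
  · exact huvw (by simp) (by simp) hvw

end CliqueCocycle

section Chordal

variable {V A : Type*} [AddCommGroup A] {G : SimpleGraph V} {c : V → V → A}

lemma two_le_length_of_notMem_edges {u v : V} (p : G.Walk u v) (hne : u ≠ v)
    (hp : s(u, v) ∉ p.edges) : 2 ≤ p.length := by
  match p with
  | .nil => exact (hne rfl).elim
  | .cons _ .nil => simp at hp
  | .cons _ (.cons _ _) => simp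

-- The chord splits the cycle into two shorter closed walks.
lemma walkSum_eq_zero_of_chord {v a b : V} (w : G.Walk v v)
    (hanti : ∀ ⦃x y⦄, G.Adj x y → c y x = -c x y)
    (hshort : ∀ ⦃x⦄ (w' : G.Walk x x), w'.length < w.length → walkSum c w' = 0)
    (ha : a ∈ w.support) (hb : b ∈ w.support) (hab : G.Adj a b) (hchord : s(a, b) ∉ w.edges) :
    walkSum c w = 0 := by
  classical
  have hb' : b ∈ (w.rotate a ha).support := (w.mem_support_rotate_iff a ha).2 hb
  let p := (w.rotate a ha).takeUntil b hb'
  let q := (w.rotate a ha).dropUntil b hb'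
  have hpq : p.append q = w.rotate a ha := (w.rotate a ha).take_spec hb'
  have hlength : p.length + q.length = w.length := by
    rw [← Walk.length_append, hpq, Walk.length_rotate]
  have hedges : s(a, b) ∉ p.edges ∧ s(a, b) ∉ q.edges := by
    rw [← not_or, ← List.mem_append, ← Walk.edges_append, hpq, (w.rotate_edges a ha).mem_iff]
    exact hchord
  have hp : 2 ≤ p.length := two_le_length_of_notMem_edges p hab.ne hedges.1
  have hq : 2 ≤ q.length :=
    two_le_length_of_notMem_edges q hab.ne' (Sym2.eq_swap (a := a) ▸ hedges.2)
  have hpsum : walkSum c (Walk.cons hab.symm p) = 0 :=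
    hshort _ (by rw [Walk.length_cons]; lia)
  have hqsum : walkSum c (Walk.cons hab q) = 0 :=
    hshort _ (by rw [Walk.length_cons]; lia)
  rw [walkSum_cons] at hpsum hqsum
  calc walkSum c w = walkSum c p + walkSum c q := by
        rw [← walkSum_rotate w ha, ← hpq, walkSum_append]
    _ = (c b a + walkSum c p) + (c a b + walkSum c q) := by rw [hanti hab]; abel
    _ = 0 := by rw [hpsum, hqsum, add_zero]

lemma IsCliqueCocycle.walkSum_eq_zero_of_length_eq_three (hc : IsCliqueCocycle G c) {v : V}
    (w : G.Walk v v) (hw : w.length = 3) : walkSum c w = 0 := by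
  match w with
  | .cons (v := x) hvx (.cons (v := y) hxy (.cons hyv .nil)) =>
    have hvxy := hc (u := v) (v := x) (w := y) (by simp [hvx, hxy, hyv.symm])
    rw [walkSum_cons, walkSum_cons, walkSum_cons, walkSum_nil, add_zero, ← add_assoc, hvxy,
      hc.antisymm hyv, neg_add_cancel]

lemma IsCliqueCocycle.exists_isPotential_of_chordal (hc : IsCliqueCocycle G c) (hG : Chordal G) :
    ∃ g : V → A, IsPotential G c g := by
  refine exists_isPotential_of_forall_closed <|
    walkSum_eq_zero_of_isCycle (fun _ _ => hc.antisymm) fun v w hw hshort => ?_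
  rcases hw.three_le_length.eq_or_lt' with h3 | h4
  · exact hc.walkSum_eq_zero_of_length_eq_three w h3
  · obtain ⟨a, b, ha, hb, hab, hchord⟩ := hG v w hw h4
    rw [Walk.adj_toSubgraph_iff_mem_edges] at hchord
    exact walkSum_eq_zero_of_chord w (fun _ _ => hc.antisymm) hshort ha hb hab hchord

lemma length_eq_three_of_triangle {u a b d : V} {w : G.Walk u u} (hw : w.IsCycle)
    (hab : w.toSubgraph.Adj a b) (hbd : w.toSubgraph.Adj b d) (had : w.toSubgraph.Adj a d) :
    w.length = 3 := by
  classical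
  have ha : a ∈ w.support := w.mem_verts_toSubgraph.1 hab.fst_mem
  rw [← w.toSubgraph_rotate ha] at hab hbd had
  rw [← w.length_rotate a ha]
  replace hw := hw.rotate ha
  generalize w.rotate a ha = w at *
  have h3 := hw.three_le_length
  have hneighbors := hw.neighborSet_toSubgraph_endpoint
  have hsnd_penultimate : w.toSubgraph.Adj w.snd w.penultimate := by
    have hb : b ∈ w.toSubgraph.neighborSet a := hab
    have hd : d ∈ w.toSubgraph.neighborSet a := had
    rw [hneighbors] at hb hd
    rcases hb with rfl | rfl <;> rcases hd with rfl | rfl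
    · exact (hbd.ne rfl).elim
    · exact hbd
    · exact hbd.symm
    · exact (hbd.ne rfl).elim
  have hmem : w.getVert (w.length - 1) ∈ w.toSubgraph.neighborSet (w.getVert 1) :=
    hsnd_penultimate
  rw [hw.neighborSet_toSubgraph_internal one_ne_zero (by lia)] at hmem
  rcases hmem with h0 | h2
  · have := hw.getVert_injOn' (by simp) (by simp) h0
    lia
  · have := hw.getVert_injOn' (by simp) (by simp only [Set.mem_ofPred_eq]; lia) h2
    lia

lemma cliqueFree_three_induce_support_of_chordless {v : V} {w : G.Walk v v} (hw : w.IsCycle)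
    (h4 : 4 ≤ w.length)
    (hchordless : ∀ a ∈ w.support, ∀ b ∈ w.support, G.Adj a b → w.toSubgraph.Adj a b) :
    (G.induce {x | x ∈ w.support}).CliqueFree 3 := by
  classical
  intro s hs
  obtain ⟨a, b, d, hab, had, hbd, -⟩ := is3Clique_iff.1 hs
  have h3 : w.length = 3 := length_eq_three_of_triangle hw
    (hchordless a a.2 b b.2 hab) (hchordless b b.2 d d.2 hbd) (hchordless a a.2 d d.2 had)
  lia

lemma isCycle_induce {s : Set V} {v : V} {w : G.Walk v v} (hw : w.IsCycle)
    (hs : ∀ x ∈ w.support, x ∈ s) : (w.induce s hs).IsCycle := by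
  rwa [← Walk.isCycle_map_iff_of_injective (f := (Embedding.induce (G := G) s).toHom)
    (Embedding.induce (G := G) s).injective, Walk.map_induce]

lemma chordal_of_forall_induce_isAcyclic
    (hG : ∀ s : Set V, (G.induce s).CliqueFree 3 → (G.induce s).IsAcyclic) : Chordal G := by
  intro v w hw h4
  by_contra! hchordless
  have hfree := cliqueFree_three_induce_support_of_chordless hw h4
    fun a ha b hb hab => hchordless a b ha hb hab
  exact hG _ hfree _ (isCycle_induce hw fun _ hx => hx)

end Chordal

lemma exists_forall_eq_of_forall_eq {ι A : Type*} [Nonempty A] {p : ι → Prop} {F : ι → A}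
    (hF : ∀ i j, p i → p j → F i = F j) : ∃ a, ∀ i, p i → F i = a := by
  by_cases hp : ∃ j, p j
  · obtain ⟨j, hj⟩ := hp
    exact ⟨F j, fun i hi => hF i j hi hj⟩
  · exact ⟨Classical.arbitrary A, fun i hi => (hp ⟨i, hi⟩).elim⟩

section Subgraph

variable {W A : Type*} [AddCommGroup A] {H : SimpleGraph W}

lemma isAcyclic_spanningCoe_iff {K : H.Subgraph} : K.spanningCoe.IsAcyclic ↔ K.coe.IsAcyclic := by
  refine ⟨fun hK => hK.embedding K.coeEmbeddingSpanningCoe, fun hK v w hw => ?_⟩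
  have hverts : ∀ x ∈ w.support, x ∈ K.verts := by
    intro x hx
    obtain ⟨e, he, hxe⟩ := (Walk.mem_support_iff_exists_mem_edges_of_not_nil hw.not_nil).1 hx
    induction e with | h y z =>
    have hyz : K.Adj y z := w.adj_of_mem_edges he
    rcases Sym2.mem_iff.1 hxe with rfl | rfl
    · exact hyz.fst_mem
    · exact hyz.snd_mem
  exact hK _ (isCycle_induce hw hverts)

lemma IsPotential.exists_forall_sub_eq {K : H.Subgraph} {c : W → W → A} {g g' : W → A}
    (hg : IsPotential K.spanningCoe c g) (hg' : IsPotential K.spanningCoe c g')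
    (hK : K.Preconnected) : ∃ a, ∀ x, x ∈ K.verts → g x - g' x = a :=
  exists_forall_eq_of_forall_eq fun x y hx hy => hg.sub_eq_sub_of_reachable hg' <|
    (hK.coe ⟨x, hx⟩ ⟨y, hy⟩).map K.coeEmbeddingSpanningCoe.toHom

end Subgraph

section RegionRep

variable {V W A : Type*} [AddCommGroup A] {G : SimpleGraph V} {H : SimpleGraph W}
  {f : V → H.Subgraph} {φ : W → W → A} {c : V → V → A} {ψ : V → W → A}

lemma IsRegionRep.inter_nonempty_of_isClique (hrep : IsRegionRep G H f) {s : Set V}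
    (hs : G.IsClique s) {u v : V} (hu : u ∈ s) (hv : v ∈ s) :
    ((f u).verts ∩ (f v).verts).Nonempty := by
  rcases eq_or_ne u v with rfl | huv
  · simpa using (hrep.1 u).nonempty
  · exact (hrep.2 u v huv).1 (hs hu hv huv)

lemma IsRegionRep.isClique_of_mem (hrep : IsRegionRep G H f) (x : W) :
    G.IsClique {v | x ∈ (f v).verts} :=
  fun u hu v hv huv => (hrep.2 u v huv).2 ⟨x, hu, hv⟩

lemma IsRegionRep.induce (hrep : IsRegionRep G H f) (s : Set V) :
    IsRegionRep (G.induce s) H fun v : s => f v :=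
  ⟨fun v => hrep.1 v, fun u v huv => hrep.2 u v (Subtype.coe_ne_coe.2 huv)⟩

/-- A potential `ψ v` of the cochain `φ` on each region `f v`, such that on the overlap of the
regions of `u` and `v` the potentials differ by the constant `c u v`. This is a zigzag in the
Čech–simplicial double complex of the cover `f`, exhibiting `φ` and `c` as cohomologous. -/
structure IsLocalPotential (f : V → H.Subgraph) (φ : W → W → A) (c : V → V → A)
    (ψ : V → W → A) : Prop where
  isPotential (v : V) : IsPotential (f v).spanningCoe φ (ψ v)
  sub_eq ⦃u v : V⦄ ⦃x : W⦄ : x ∈ (f u).verts → x ∈ (f v).verts → ψ v x - ψ u x = c u v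

lemma IsLocalPotential.antisymm (h : IsLocalPotential f φ c ψ) ⦃x y : W⦄
    (hxy : (⨆ v, f v).spanningCoe.Adj x y) : φ y x = -φ x y := by
  obtain ⟨v, hv⟩ := Subgraph.iSup_adj.1 hxy
  exact (h.isPotential v).antisymm hv

-- Subtracting the value of a potential of `c` from each `ψ v` makes them agree on overlaps.
lemma IsLocalPotential.exists_isPotential_iSup (h : IsLocalPotential f φ c ψ)
    (hrep : IsRegionRep G H f) {g : V → A} (hg : IsPotential G c g) :
    ∃ Ψ, IsPotential (⨆ v, f v).spanningCoe φ Ψ := by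
  have hagree : ∀ x, ∃ t, ∀ v, x ∈ (f v).verts → ψ v x - g v = t := by
    refine fun x => exists_forall_eq_of_forall_eq fun u v hu hv => ?_
    rcases eq_or_ne v u with rfl | hvu
    · rfl
    · rw [sub_eq_sub_iff_sub_eq_sub, h.sub_eq hv hu, hg (hrep.isClique_of_mem x hv hu hvu)]
  choose Ψ hΨ using hagree
  refine ⟨Ψ, fun x y hxy => ?_⟩
  obtain ⟨v, hv⟩ := Subgraph.iSup_adj.1 hxy
  rw [← hΨ x v hv.fst_mem, ← hΨ y v hv.snd_mem, sub_sub_sub_cancel_right, h.isPotential v hv]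

-- On each region the global potential differs from the local one by a constant.
lemma IsLocalPotential.exists_isPotential (h : IsLocalPotential f φ c ψ)
    (hrep : IsRegionRep G H f) {Ψ : W → A} (hΨ : IsPotential (⨆ v, f v).spanningCoe φ Ψ) :
    ∃ g, IsPotential G c g := by
  have hconst : ∀ v, ∃ k, ∀ x ∈ (f v).verts, ψ v x - Ψ x = k := fun v =>
    (h.isPotential v).exists_forall_sub_eq
      (hΨ.mono (Subgraph.spanningCoe_le_of_le (le_iSup f v))) (hrep.1 v).preconnected
  choose g hg using hconst
  refine ⟨g, fun u v huv => ?_⟩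
  obtain ⟨x, hu, hv⟩ := (hrep.2 u v huv.ne).1 huv
  rw [← hg u x hu, ← hg v x hv, sub_sub_sub_cancel_right, h.sub_eq hu hv]

-- The role of a partition of unity is played by a choice of one region through each point.
lemma IsCliqueCocycle.exists_isLocalPotential (hc : IsCliqueCocycle G c)
    (hrep : IsRegionRep G H f) : ∃ φ ψ, IsLocalPotential f φ c ψ := by
  have hregion : ∀ x, ∃ t : V → A, ∀ u v, x ∈ (f u).verts → x ∈ (f v).verts →
      t v - t u = c u v := by
    intro x
    by_cases hx : ∃ r, x ∈ (f r).verts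
    · obtain ⟨r, hr⟩ := hx
      refine ⟨c r, fun u v hu hv => sub_eq_of_eq_add' (hc ?_).symm⟩
      refine (hrep.isClique_of_mem x).subset ?_
      rintro _ (rfl | rfl | rfl) <;> assumption
    · exact ⟨0, fun u _ hu _ => (hx ⟨u, hu⟩).elim⟩
  choose t ht using hregion
  have hedge : ∀ x y, ∃ a, ∀ v, (f v).Adj x y → t y v - t x v = a := by
    refine fun x y => exists_forall_eq_of_forall_eq fun u v hu hv => ?_
    rw [sub_eq_sub_iff_sub_eq_sub, ht y v u hv.snd_mem hu.snd_mem,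
      ht x v u hv.fst_mem hu.fst_mem]
  choose φ hφ using hedge
  exact ⟨φ, fun v x => t x v, fun v x y hxy => hφ x y v hxy, fun u v x hu hv => ht x u v hu hv⟩

lemma RepAcyclic.exists_isPotential {r : ℕ} (hr : RepAcyclic H f r)
    (hφ : ∀ ⦃x y⦄, (⨆ v, f v).spanningCoe.Adj x y → φ y x = -φ x y) {X : Finset V}
    (hX : X.card ≤ r) : ∃ θ, ∀ v ∈ X, IsPotential (f v).spanningCoe φ θ := by
  have hle : ⨆ v ∈ X, f v ≤ ⨆ v, f v := iSup₂_le fun v _ => le_iSup f v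
  obtain ⟨θ, hθ⟩ := exists_isPotential_of_isAcyclic (isAcyclic_spanningCoe_iff.2 (hr X hX))
    fun x y hxy => hφ (Subgraph.spanningCoe_le_of_le hle hxy)
  exact ⟨θ, fun v hv => hθ.mono (Subgraph.spanningCoe_le_of_le (le_iSup₂_of_le v hv le_rfl))⟩

lemma RepAcyclic.exists_overlap_sub_eq {r : ℕ} (hr : RepAcyclic H f r)
    (hrep : IsRegionRep G H f)
    (hφ : ∀ ⦃x y⦄, (⨆ v, f v).spanningCoe.Adj x y → φ y x = -φ x y)
    (hψ : ∀ v, IsPotential (f v).spanningCoe φ (ψ v)) {X : Finset V} (hX : X.card ≤ r) :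
    ∃ k : V → A, ∀ u ∈ X, ∀ v ∈ X, ∀ x ∈ (f u).verts ∩ (f v).verts,
      ψ v x - ψ u x = k v - k u := by
  obtain ⟨θ, hθ⟩ := hr.exists_isPotential hφ hX
  have hconst : ∀ v ∈ X, ∃ k, ∀ x ∈ (f v).verts, ψ v x - θ x = k := fun v hv =>
    (hψ v).exists_forall_sub_eq (hθ v hv) (hrep.1 v).preconnected
  choose! k hk using hconst
  refine ⟨k, fun u hu v hv x hx => ?_⟩
  rw [← hk u hu x hx.1, ← hk v hv x hx.2, sub_sub_sub_cancel_right]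

lemma RepAcyclic.exists_isLocalPotential (h3 : RepAcyclic H f 3) (hrep : IsRegionRep G H f)
    (hφ : ∀ ⦃x y⦄, (⨆ v, f v).spanningCoe.Adj x y → φ y x = -φ x y) :
    ∃ c ψ, IsCliqueCocycle G c ∧ IsLocalPotential f φ c ψ := by
  classical
  have hlocal : ∀ v, ∃ ψ, IsPotential (f v).spanningCoe φ ψ := by
    intro v
    obtain ⟨ψ, hψ⟩ := h3.exists_isPotential hφ (X := {v}) (by simp)
    exact ⟨ψ, hψ v (by simp)⟩
  choose ψ hψ using hlocal
  have htransition : ∀ u v, ∃ a, ∀ x ∈ (f u).verts ∩ (f v).verts, ψ v x - ψ u x = a := by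
    intro u v
    obtain ⟨k, hk⟩ := h3.exists_overlap_sub_eq hrep hφ hψ (X := {u, v})
      (Finset.card_le_two.trans (by simp))
    exact ⟨k v - k u, hk u (by simp) v (by simp)⟩
  choose c hc using htransition
  refine ⟨c, ψ, fun u v w huvw => ?_, hψ, fun u v x hu hv => hc u v x ⟨hu, hv⟩⟩
  obtain ⟨k, hk⟩ := h3.exists_overlap_sub_eq hrep hφ hψ (X := {u, v, w}) Finset.card_le_three
  have hck : ∀ a ∈ ({u, v, w} : Finset V), ∀ b ∈ ({u, v, w} : Finset V), c a b = k b - k a := by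
    intro a ha b hb
    obtain ⟨x, hx⟩ := hrep.inter_nonempty_of_isClique huvw (u := a) (v := b)
      (by simpa using ha) (by simpa using hb)
    rw [← hc a b x hx, hk a ha b hb x hx]
  rw [hck u (by simp) v (by simp), hck v (by simp) w (by simp), hck u (by simp) w (by simp),
    sub_add_sub_cancel']

lemma IsCliqueCocycle.exists_isPotential_of_isAcyclic_iSup (hc : IsCliqueCocycle G c)
    (hrep : IsRegionRep G H f) (hf : (⨆ v, f v).coe.IsAcyclic) : ∃ g, IsPotential G c g := by
  obtain ⟨φ, ψ, hψ⟩ := hc.exists_isLocalPotential hrep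
  obtain ⟨Ψ, hΨ⟩ := exists_isPotential_of_isAcyclic (isAcyclic_spanningCoe_iff.2 hf) hψ.antisymm
  exact hψ.exists_isPotential hrep hΨ

lemma RepAcyclic.isAcyclic_iSup (h3 : RepAcyclic H f 3) (hrep : IsRegionRep G H f)
    (hG : ∀ c : V → V → ℤ, IsCliqueCocycle G c → ∃ g, IsPotential G c g) :
    (⨆ v, f v).coe.IsAcyclic := by
  refine isAcyclic_spanningCoe_iff.1 (isAcyclic_of_forall_exists_isPotential fun φ hφ => ?_)
  obtain ⟨c, ψ, hc, hψ⟩ := h3.exists_isLocalPotential hrep fun x y _ => hφ x y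
  obtain ⟨g, hg⟩ := hG c hc
  exact hψ.exists_isPotential_iSup hrep hg

lemma IsRegionRep.isAcyclic_of_cliqueFree_three (hrep : IsRegionRep G H f)
    (hf : (⨆ v, f v).coe.IsAcyclic) (hG : G.CliqueFree 3) : G.IsAcyclic := by
  refine isAcyclic_of_forall_exists_isPotential fun c hc => ?_
  have hcocycle : IsCliqueCocycle G c :=
    isCliqueCocycle_of_cliqueFree_three hG (fun v => self_eq_neg.1 (hc v v)) hc
  exact hcocycle.exists_isPotential_of_isAcyclic_iSup hrep hf

end RegionRep

/-- for a 3-acyclic region representation of `G`, the graph `G` is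
chordal iff the union of all regions is acyclic. -/
theorem stmt10 {V W : Type*} (G : SimpleGraph V) (H : SimpleGraph W) (f : V → H.Subgraph)
    (hrep : IsRegionRep G H f) (h3 : RepAcyclic H f 3) :
    Chordal G ↔ (⨆ v, f v).coe.IsAcyclic := by
  refine ⟨fun hG => h3.isAcyclic_iSup hrep fun c hc => hc.exists_isPotential_of_chordal hG,
    fun hf => chordal_of_forall_induce_isAcyclic fun s hs => ?_⟩
  have hle : ⨆ v : s, f v ≤ ⨆ v, f v := iSup_le fun v => le_iSup f v
  have hacyclic : (⨆ v : s, f v).coe.IsAcyclic :=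
    hf.comap (Subgraph.inclusion hle) (Subgraph.inclusion.injective hle)
  exact (hrep.induce s).isAcyclic_of_cliqueFree_three hacyclic hs
end

section
/- Let v ↦ H_v be a 3-acyclic region representation of a graph G over a graph H, and let X be a vertex-subset of G. Then G[X] is an induced cycle of length at least 4 if and only if X is inclusion-minimal with the property that H_X := ⋃_{x∈X} H_x contains a cycle. -/
open SimpleGraph

/-- `G[X]` is an induced cycle of length `n`: there is a cycle in `G` with support
exactly `X` such that every edge of `G` between vertices of `X` is an edge of the cycle. -/
def IsInducedCycleOn {V : Type*} (G : SimpleGraph V) (X : Set V) (n : ℕ) : Prop :=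
  ∃ (v : V) (w : G.Walk v v), w.IsCycle ∧ w.length = n ∧
    {x | x ∈ w.support} = X ∧
    ∀ a b, a ∈ X → b ∈ X → G.Adj a b → w.toSubgraph.Adj a b

/-!
For the forward direction, delete a vertex `x` from an induced cycle of length at least 4, leaving
a chordless path from `y` to `z`. The regions of `y` and `z` are disjoint, and both `H_x` and the
union of the regions along the path connect `H_x ∩ H_y` to `H_x ∩ H_z`. In a forest the two
connections would coincide, but the part of `H_x` lying in other regions of the path splits into a
part in `H_y` and a part in `H_z`.

Conversely, every `Y` with `H_Y` not a forest contains an induced cycle of length at least 4. Take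
a maximal `Z ⊆ Y` with `H_Z` a forest and `x ∈ Y \ Z`. As `H_x ∪ H_Z` has a cycle, two vertices of
the tree `H_x` are connected in `H_Z` but not in `H_x ∩ H_Z`; this is witnessed by a walk of `G[Z]`
between two neighbours of `x`. A shortest such walk is chordless and has no further neighbour of
`x` on it, and 3-acyclicity forces its length to be at least 2, so it closes up through `x`.
Since an induced cycle contains no smaller induced cycle, both directions of the theorem follow.
-/

section Forests

variable {W : Type*} {A B : SimpleGraph W} {u v : W}

lemma mem_of_reachable_of_mem {s : Set W} (hs : ∀ ⦃a b⦄, A.Adj a b → a ∈ s → b ∈ s)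
    (h : A.Reachable u v) (hu : u ∈ s) : v ∈ s := by
  rw [reachable_iff_reflTransGen] at h
  induction h with
  | refl => exact hu
  | tail _ hab ha => exact hs hab ha

lemma isAcyclic_induce_iff_of_support_subset {s : Set W} (hs : A.support ⊆ s) :
    (A.induce s).IsAcyclic ↔ A.IsAcyclic := by
  refine ⟨fun h v c hc ↦ ?_, fun h ↦ h.induce s⟩
  have hcs : ∀ x ∈ c.support, x ∈ s := fun x hx ↦
    hs (mem_support_of_mem_walk_support c hc.not_nil hx)
  refine h (c.induce s hcs) (Walk.IsCycle.of_map (f := (Embedding.induce s).toHom) ?_)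
  rwa [Walk.map_induce]

lemma isAcyclic_coe_iff_isAcyclic_spanningCoe (S : A.Subgraph) :
    S.coe.IsAcyclic ↔ S.spanningCoe.IsAcyclic :=
  isAcyclic_induce_iff_of_support_subset (A := S.spanningCoe) fun _ ⟨_, h⟩ ↦ S.edge_vert h

lemma reachable_spanningCoe_of_preconnected {S : A.Subgraph} (hS : S.Preconnected)
    (hu : u ∈ S.verts) (hv : v ∈ S.verts) : S.spanningCoe.Reachable u v :=
  (hS.coe ⟨u, hu⟩ ⟨v, hv⟩).map S.coeEmbeddingSpanningCoe.toHom

lemma reachable_inf_of_isAcyclic_sup (h : (A ⊔ B).IsAcyclic) (hA : A.Reachable u v)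
    (hB : B.Reachable u v) : (A ⊓ B).Reachable u v := by
  obtain ⟨a, ha⟩ := hA.exists_isPath
  obtain ⟨b, hb⟩ := hB.exists_isPath
  have hab : a.mapLe le_sup_left = b.mapLe le_sup_right := congrArg Subtype.val
    ((h.subsingleton_path u v).elim ⟨_, ha.mapLe le_sup_left⟩ ⟨_, hb.mapLe le_sup_right⟩)
  have hedges : a.edges = b.edges := by
    rw [← Walk.edges_mapLe_eq_edges le_sup_left, hab, Walk.edges_mapLe_eq_edges]
  refine ⟨a.transfer _ fun e he ↦ ?_⟩
  rw [edgeSet_inf]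
  exact ⟨a.edges_subset_edgeSet he, b.edges_subset_edgeSet (hedges ▸ he)⟩

lemma reachable_of_reachable_sup {S : Set W} (hS : A.support ⊆ S)
    (h : ∀ p ∈ S, ∀ q ∈ S, B.Reachable p q → A.Reachable p q) (hu : u ∈ S) (hv : v ∈ S)
    (huv : (A ⊔ B).Reachable u v) : A.Reachable u v := by
  obtain ⟨s, hs, hus, hsv⟩ : v ∈ {w | ∃ s ∈ S, A.Reachable u s ∧ B.Reachable s w} := by
    refine mem_of_reachable_of_mem ?_ huv ⟨u, hu, .rfl, .rfl⟩
    rintro a b (hab | hab) ⟨s, hs, hus, hsa⟩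
    · have hua := hus.trans (h s hs a (hS hab.left_mem_support) hsa)
      exact ⟨b, hS hab.right_mem_support, hua.trans hab.reachable, .rfl⟩
    · exact ⟨s, hs, hus, hsa.trans hab.reachable⟩
  exact hus.trans (h s hs v hv hsv)

lemma reachable_or_exists_mem_support_of_reachable_sup (h : (A ⊔ B).Reachable u v) :
    B.Reachable u v ∨
      ∃ s ∈ A.support, ∃ t ∈ A.support, B.Reachable u s ∧ B.Reachable t v := by
  refine mem_of_reachable_of_mem (s := {w | B.Reachable u w ∨
    ∃ s ∈ A.support, ∃ t ∈ A.support, B.Reachable u s ∧ B.Reachable t w}) ?_ h (.inl .rfl)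
  rintro a b (hab | hab) (hua | ⟨s, hs, t, ht, hus, hta⟩)
  · exact .inr ⟨a, hab.left_mem_support, b, hab.right_mem_support, hua, .rfl⟩
  · exact .inr ⟨s, hs, b, hab.right_mem_support, hus, .rfl⟩
  · exact .inl (hua.trans hab.reachable)
  · exact .inr ⟨s, hs, t, ht, hus, hta.trans hab.reachable⟩

lemma isAcyclic_sup (hA : A.IsAcyclic) (hB : B.IsAcyclic)
    (h : ∀ p ∈ A.support, ∀ q ∈ A.support, B.Reachable p q → (A ⊓ B).Reachable p q) :
    (A ⊔ B).IsAcyclic := by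
  rw [isAcyclic_iff_forall_adj_isBridge]
  intro u v huv
  let E : SimpleGraph W := fromEdgeSet {s(u, v)}
  rw [isBridge_iff, show (A ⊔ B).deleteEdges {s(u, v)} = A \ E ⊔ B \ E from sup_sdiff]
  intro hr
  by_cases hAuv : A.Adj u v
  · have hpq : ∀ p ∈ A.support, ∀ q ∈ A.support,
        (B \ E).Reachable p q → (A \ E).Reachable p q := by
      intro p hp q hq hpq
      have hinf : (A ⊓ B ⊓ (B \ E)).Reachable p q :=
        reachable_inf_of_isAcyclic_sup (hB.anti (sup_le inf_le_right sdiff_le))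
          (h p hp q hq (hpq.mono sdiff_le)) hpq
      refine hinf.mono fun a b hab ↦ ?_
      exact ⟨hab.1.1, hab.2.2⟩
    have huv' : (A \ E).Reachable u v := reachable_of_reachable_sup
      (support_mono sdiff_le) hpq hAuv.left_mem_support hAuv.right_mem_support hr
    exact isBridge_iff.1 (isAcyclic_iff_forall_adj_isBridge.1 hA hAuv) huv'
  · have hBuv : B.Adj u v := huv.resolve_left hAuv
    refine isBridge_iff.1 (isAcyclic_iff_forall_adj_isBridge.1 hB hBuv) ?_
    obtain huv' | ⟨s, hs, t, ht, hus, htv⟩ := reachable_or_exists_mem_support_of_reachable_sup hr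
    · exact huv'
    have hsupp : (A \ E).support ⊆ A.support := support_mono sdiff_le
    have hst : B.Reachable s t :=
      (hus.mono sdiff_le).symm.trans (hBuv.reachable.trans (htv.mono sdiff_le).symm)
    have hst' : (B \ E).Reachable s t := by
      refine (h s (hsupp hs) t (hsupp ht) hst).mono fun a b hab ↦ ?_
      refine ⟨hab.2, fun hE ↦ hAuv ?_⟩
      rw [← mem_edgeSet, ← show s(a, b) = s(u, v) from hE.1]
      exact hab.1
    exact (hus.trans hst').trans htv

end Forests

section InducedCycles

variable {V : Type*} {G : SimpleGraph V} {x y z : V} {w : G.Walk y z}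

lemma isPath_of_forall_length_le
    (h : ∀ w' : G.Walk y z, w'.support ⊆ w.support → w.length ≤ w'.length) : w.IsPath := by
  classical
  rw [← w.bypass_eq_self_of_length_le_length_bypass (h _ w.support_bypass_subset_support)]
  exact w.bypass_isPath

lemma isChordless_of_forall_length_le
    (h : ∀ w' : G.Walk y z, w'.support ⊆ w.support → w.length ≤ w'.length) : w.IsChordless := by
  have key : ∀ i j, i ≤ j → j ≤ w.length → G.Adj (w.getVert i) (w.getVert j) → j = i + 1 := by
    intro i j hij hj hadj
    have hlen := h ((w.take i).append (.cons hadj (w.drop j))) fun v hv ↦ by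
      rw [Walk.mem_support_append_iff, Walk.support_cons, List.mem_cons] at hv
      obtain hv | rfl | hv := hv
      · exact (w.isSubwalk_take i).support_subset hv
      · exact w.getVert_mem_support i
      · exact (w.isSubwalk_drop j).support_subset hv
    have hne : i ≠ j := fun hij ↦ hadj.ne (congrArg w.getVert hij)
    simp only [Walk.length_append, Walk.length_cons, Walk.take_length, Walk.drop_length] at hlen
    omega
  refine Walk.isChordless_iff_forall_mem_edges.2 fun a b ha hb hab ↦ ?_
  obtain ⟨i, rfl, hi⟩ := Walk.mem_support_iff_exists_getVert.1 ha
  obtain ⟨j, rfl, hj⟩ := Walk.mem_support_iff_exists_getVert.1 hb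
  rw [Walk.mk_mem_edges_iff_exists]
  obtain hij | hij := le_total i j
  · obtain rfl := key i j hij hj hab
    exact ⟨i, by omega, rfl⟩
  · obtain rfl := key j i hij hi hab.symm
    exact ⟨j, by omega, Sym2.eq_swap⟩

lemma IsInducedCycleOn.eq_of_subset {X Y : Set V} {m n : ℕ} (hX : IsInducedCycleOn G X m)
    (hY : IsInducedCycleOn G Y n) (h : X ⊆ Y) : X = Y := by
  obtain ⟨a, c, hc, -, rfl, -⟩ := hX
  obtain ⟨b, d, hd, -, rfl, hind⟩ := hY
  have hadj : ∀ ⦃s t⦄, d.toSubgraph.Adj s t → s ∈ c.support → t ∈ c.support := by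
    intro s t hst hs
    have hnbr : c.toSubgraph.neighborSet s = d.toSubgraph.neighborSet s := by
      refine Set.eq_of_subset_of_ncard_le (fun r hr ↦ ?_) ?_ d.finite_neighborSet_toSubgraph
      · exact hind s r (h hs) (h (c.mem_verts_toSubgraph.1 hr.snd_mem)) hr.adj_sub
      · rw [hd.ncard_neighborSet_toSubgraph_eq_two (h hs),
          hc.ncard_neighborSet_toSubgraph_eq_two hs]
    have ht : t ∈ c.toSubgraph.neighborSet s := hnbr ▸ hst
    exact c.mem_verts_toSubgraph.1 ht.snd_mem
  refine h.antisymm fun t ht ↦ ?_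
  have hat : d.toSubgraph.spanningCoe.Reachable a t :=
    reachable_spanningCoe_of_preconnected d.toSubgraph_connected.preconnected
      (d.mem_verts_toSubgraph.2 (h c.start_mem_support)) (d.mem_verts_toSubgraph.2 ht)
  exact mem_of_reachable_of_mem hadj hat c.start_mem_support

/-- `w` is what remains of an induced cycle of length at least 4 after deleting its vertex `x`.
Splitting such a cycle at a vertex lets one compare `H_x` with the union of the other regions. -/
structure IsHolePath (x : V) (w : G.Walk y z) : Prop where
  isPath : w.IsPath
  isChordless : w.IsChordless
  two_le_length : 2 ≤ w.length
  notMem_support : x ∉ w.support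
  adj_iff : ∀ v ∈ w.support, (G.Adj x v ↔ v = y ∨ v = z)

namespace IsHolePath

lemma adj_start (h : IsHolePath x w) : G.Adj x y :=
  (h.adj_iff y w.start_mem_support).2 (.inl rfl)

lemma adj_end (h : IsHolePath x w) : G.Adj x z :=
  (h.adj_iff z w.end_mem_support).2 (.inr rfl)

lemma ne (h : IsHolePath x w) : y ≠ z := by
  rintro rfl
  have := Walk.length_eq_zero_iff.2 (Walk.isPath_iff_nil.1 h.isPath)
  have := h.two_le_length
  omega

lemma not_adj (h : IsHolePath x w) : ¬ G.Adj y z := by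
  intro hyz
  have := h.isPath.length_eq_one_of_mem_edges
    (h.isChordless.mem_edges w.start_mem_support w.end_mem_support hyz)
  have := h.two_le_length
  omega

lemma isInducedCycleOn (h : IsHolePath x w) :
    IsInducedCycleOn G (insert x {v | v ∈ w.support}) (w.length + 2) := by
  let c : G.Walk x x := .cons h.adj_start (w.concat h.adj_end.symm)
  have hcs (t) : t ∈ c.support ↔ t = x ∨ t ∈ w.support := by
    simp [c, Walk.support_concat, or_comm]
  have hce (e) : e ∈ c.edges ↔ e = s(x, y) ∨ e ∈ w.edges ∨ e = s(z, x) := by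
    simp [c, Walk.edges_concat]
  refine ⟨x, c, ?_, by simp [c], Set.ext hcs, ?_⟩
  · refine (Walk.cons_isCycle_iff _ _).2 ⟨h.isPath.concat h.notMem_support _, fun hxy ↦ ?_⟩
    obtain hxy | hxy : s(x, y) ∈ w.edges ∨ s(x, y) = s(z, x) := by
      simpa [Walk.edges_concat] using hxy
    · exact h.notMem_support (w.fst_mem_support_of_mem_edges hxy)
    · obtain ⟨hxz, -⟩ | ⟨-, hyz⟩ := Sym2.eq_iff.1 hxy
      · exact h.adj_end.ne hxz
      · exact h.ne hyz
  · have hx : ∀ b ∈ w.support, G.Adj x b → s(x, b) ∈ c.edges := by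
      intro b hb hxb
      obtain rfl | rfl := (h.adj_iff b hb).1 hxb
      · exact (hce _).2 (.inl rfl)
      · exact (hce _).2 (.inr (.inr Sym2.eq_swap))
    rintro a b (rfl | ha) (rfl | hb) hab <;> rw [Walk.adj_toSubgraph_iff_mem_edges]
    · exact absurd rfl hab.ne
    · exact hx b hb hab
    · exact Sym2.eq_swap ▸ hx a ha hab.symm
    · exact (hce _).2 (.inr (.inl (h.isChordless.mem_edges ha hb hab)))

end IsHolePath

lemma IsInducedCycleOn.exists_isHolePath {X : Set V} {n : ℕ} (hX : IsInducedCycleOn G X n)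
    (hn : 4 ≤ n) : ∃ (x y z : V) (w : G.Walk y z),
      IsHolePath x w ∧ X = insert x {v | v ∈ w.support} := by
  obtain ⟨x, c, hc, rfl, rfl, hind⟩ := hX
  obtain _ | @⟨_, y, _, hxy, r⟩ := c
  · simp at hn
  obtain _ | ⟨hyt, r⟩ := r
  · exact absurd rfl hxy.ne
  obtain ⟨z, w, hzx, hw⟩ := Walk.exists_cons_eq_concat hyt r
  rw [hw] at hc hn hind ⊢
  obtain ⟨hpath, hxw⟩ := (Walk.concat_isPath_iff _).1 ((Walk.cons_isCycle_iff _ _).1 hc).1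
  have hsupp (t) : t ∈ (Walk.cons hxy (w.concat hzx)).support ↔ t = x ∨ t ∈ w.support := by
    simp [Walk.support_concat, or_comm]
  have hedge : ∀ ⦃a b⦄, (a = x ∨ a ∈ w.support) → b ∈ w.support → G.Adj a b →
      s(a, b) = s(x, y) ∨ s(a, b) ∈ w.edges ∨ s(a, b) = s(x, z) := by
    intro a b ha hb hab
    have hmem := Walk.adj_toSubgraph_iff_mem_edges.1
      (hind a b ((hsupp a).2 ha) ((hsupp b).2 (.inr hb)) hab)
    rw [Sym2.eq_swap (a := x) (b := z)]
    rwa [Walk.edges_cons, Walk.edges_concat, List.concat_eq_append, List.mem_cons,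
      List.mem_append, List.mem_singleton] at hmem
  refine ⟨x, y, z, w, ⟨hpath, ?_, by simpa using hn, hxw, fun v hv ↦ ⟨fun hxv ↦ ?_, ?_⟩⟩,
    Set.ext hsupp⟩
  · refine Walk.isChordless_iff_forall_mem_edges.2 fun a b ha hb hab ↦ ?_
    have hne : ∀ t, s(a, b) ≠ s(x, t) := by
      intro t ht
      obtain rfl | rfl := Sym2.mem_iff.1 (ht ▸ Sym2.mem_mk_left x t)
      exacts [hxw ha, hxw hb]
    exact (hedge (.inr ha) hb hab).resolve_left (hne y) |>.resolve_right (hne z)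
  · obtain hvy | hxv | hvz := hedge (.inl rfl) hv hxv
    · exact .inl (Sym2.congr_right.1 hvy)
    · exact absurd (w.fst_mem_support_of_mem_edges hxv) hxw
    · exact .inr (Sym2.congr_right.1 hvz)
  · rintro (rfl | rfl)
    exacts [hxy, hzx.symm]

end InducedCycles

section RegionUnions

variable {V W : Type*} {G : SimpleGraph V} {H : SimpleGraph W} {f : V → H.Subgraph}
  {x y z : V} {Y Z : Set V} {p q : W}

/-- The union `H_Z` of the regions of the vertices in `Z`. It is taken as a graph on all of `W`,
so that unions over different `Z` can be compared and combined as graphs on one vertex type. -/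
def regionUnion (f : V → H.Subgraph) (Z : Set V) : SimpleGraph W :=
  (⨆ z ∈ Z, f z).spanningCoe

lemma isAcyclic_coe_iSup_iff : (⨆ z ∈ Z, f z).coe.IsAcyclic ↔ (regionUnion f Z).IsAcyclic :=
  isAcyclic_coe_iff_isAcyclic_spanningCoe _

lemma regionUnion_adj : (regionUnion f Z).Adj p q ↔ ∃ z ∈ Z, (f z).Adj p q := by
  simp [regionUnion, Subgraph.iSup_adj]

lemma regionUnion_mono (h : Y ⊆ Z) : regionUnion f Y ≤ regionUnion f Z :=
  Subgraph.spanningCoe_le_of_le (biSup_mono h)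

lemma spanningCoe_le_regionUnion (hz : z ∈ Z) : (f z).spanningCoe ≤ regionUnion f Z :=
  Subgraph.spanningCoe_le_of_le (le_biSup f hz)

lemma regionUnion_insert :
    regionUnion f (insert x Z) = (f x).spanningCoe ⊔ regionUnion f Z := by
  rw [regionUnion, iSup_insert, Subgraph.sup_spanningCoe, regionUnion]

lemma regionUnion_sUnion (c : Set (Set V)) :
    regionUnion f (⋃₀ c) = sSup (regionUnion f '' c) := by
  ext p q
  simp only [regionUnion_adj, Set.mem_sUnion, sSup_adj, Set.exists_mem_image]
  tauto

lemma exists_isAcyclic_regionUnion_insert_not (hY : ¬ (regionUnion f Y).IsAcyclic) :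
    ∃ Z x, x ∉ Z ∧ insert x Z ⊆ Y ∧
      (regionUnion f Z).IsAcyclic ∧ ¬ (regionUnion f (insert x Z)).IsAcyclic := by
  obtain ⟨Z, ⟨hZY, hZ⟩, hmax⟩ :
      ∃ Z, Maximal (· ∈ {Z | Z ⊆ Y ∧ (regionUnion f Z).IsAcyclic}) Z := by
    refine zorn_subset _ fun c hc hchain ↦
      ⟨⋃₀ c, ⟨Set.sUnion_subset fun Z hZ ↦ (hc hZ).1, ?_⟩, fun _ ↦ Set.subset_sUnion_of_mem⟩
    rw [regionUnion_sUnion]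
    refine isAcyclic_sSup_of_isAcyclic_directedOn _ ?_ ?_
    · rintro _ ⟨Z, hZ, rfl⟩
      exact (hc hZ).2
    · rintro _ ⟨Z₁, h₁, rfl⟩ _ ⟨Z₂, h₂, rfl⟩
      obtain ⟨Z, hZ, h₁Z, h₂Z⟩ := hchain.directedOn Z₁ h₁ Z₂ h₂
      exact ⟨_, ⟨Z, hZ, rfl⟩, regionUnion_mono h₁Z, regionUnion_mono h₂Z⟩
  obtain ⟨x, hxY, hxZ⟩ := Set.not_subset.1 fun h : Y ⊆ Z ↦ hY (hZ.anti (regionUnion_mono h))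
  have hins : insert x Z ⊆ Y := Set.insert_subset hxY hZY
  exact ⟨Z, x, hxZ, hins, hZ, fun h ↦
    hxZ (hmax ⟨hins, h⟩ (Set.subset_insert x Z) (Set.mem_insert x Z))⟩

lemma RepAcyclic.isAcyclic_regionUnion {r : ℕ} (h : RepAcyclic H f r) (T : Finset V)
    (hT : T.card ≤ r) : (regionUnion f T).IsAcyclic :=
  isAcyclic_coe_iSup_iff.1 (h T hT)

namespace IsRegionRep

lemma reachable_spanningCoe (hrep : IsRegionRep G H f) (hp : p ∈ (f x).verts)
    (hq : q ∈ (f x).verts) : (f x).spanningCoe.Reachable p q :=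
  reachable_spanningCoe_of_preconnected (hrep.1 x).preconnected hp hq

lemma reachable_regionUnion_of_walk (hrep : IsRegionRep G H f) (w : G.Walk y z)
    (hw : ∀ v ∈ w.support, v ∈ Z) (hp : p ∈ (f y).verts) (hq : q ∈ (f z).verts) :
    (regionUnion f Z).Reachable p q := by
  have hreg : ∀ ⦃v⦄, v ∈ w.support → ∀ ⦃a b⦄, a ∈ (f v).verts → b ∈ (f v).verts →
      (regionUnion f Z).Reachable a b := fun v hv _ _ ha hb ↦
    (hrep.reachable_spanningCoe ha hb).mono (spanningCoe_le_regionUnion (hw v hv))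
  induction w generalizing p with
  | nil => exact hreg (by simp) hp hq
  | cons hadj w ih =>
    obtain ⟨r, hr, hr'⟩ := (hrep.2 _ _ hadj.ne).1 hadj
    exact (hreg (by simp) hp hr).trans
      (ih (fun v hv ↦ hw v (by simp [hv])) hr' hq fun v hv ↦ hreg (by simp [hv]))

lemma exists_walk_of_reachable_regionUnion (hrep : IsRegionRep G H f)
    (h : (regionUnion f Z).Reachable p q) (hy : y ∈ Z) (hp : p ∈ (f y).verts) :
    ∃ (z : V) (w : G.Walk y z), q ∈ (f z).verts ∧ ∀ v ∈ w.support, v ∈ Z := by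
  refine mem_of_reachable_of_mem
    (s := {q | ∃ (z : V) (w : G.Walk y z), q ∈ (f z).verts ∧ ∀ v ∈ w.support, v ∈ Z})
    ?_ h ⟨y, .nil, hp, by simpa using hy⟩
  rintro a b hab ⟨z, w, ha, hw⟩
  obtain ⟨t, ht, hab⟩ := regionUnion_adj.1 hab
  obtain rfl | hzt := eq_or_ne z t
  · exact ⟨z, w, hab.snd_mem, hw⟩
  · have hadj : G.Adj z t := (hrep.2 z t hzt).2 ⟨a, ha, hab.fst_mem⟩
    refine ⟨t, w.concat hadj, hab.snd_mem, fun v hv ↦ ?_⟩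
    obtain hv | rfl : v ∈ w.support ∨ v = t := by simpa [Walk.support_concat] using hv
    exacts [hw v hv, ht]

lemma not_isAcyclic_regionUnion_of_isHolePath (hrep : IsRegionRep G H f) {w : G.Walk y z}
    (hw : IsHolePath x w) :
    ¬ (regionUnion f (insert x {v | v ∈ w.support})).IsAcyclic := by
  intro hac
  rw [regionUnion_insert] at hac
  have hdisj : ∀ a ∈ (f y).verts, a ∉ (f z).verts := fun a hy hz ↦
    hw.not_adj ((hrep.2 y z hw.ne).2 ⟨a, hy, hz⟩)
  obtain ⟨p, hpx, hpy⟩ := (hrep.2 x y hw.adj_start.ne).1 hw.adj_start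
  obtain ⟨q, hqx, hqz⟩ := (hrep.2 x z hw.adj_end.ne).1 hw.adj_end
  have hpq : ((f x).spanningCoe ⊓ regionUnion f {v | v ∈ w.support}).Reachable p q :=
    reachable_inf_of_isAcyclic_sup hac (hrep.reachable_spanningCoe hpx hqx)
      (hrep.reachable_regionUnion_of_walk w (fun _ hv ↦ hv) hpy hqz)
  refine hdisj q (mem_of_reachable_of_mem ?_ hpq hpy) hqz
  rintro a b ⟨habx, hab⟩ hay
  obtain ⟨v, hv, habv⟩ := regionUnion_adj.1 hab
  have hxv : G.Adj x v := (hrep.2 x v (ne_of_mem_of_not_mem hv hw.notMem_support).symm).2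
    ⟨a, (f x).edge_vert habx, habv.fst_mem⟩
  obtain rfl | rfl := (hw.adj_iff v hv).1 hxv
  · exact habv.snd_mem
  · exact absurd habv.fst_mem (hdisj a hay)

end IsRegionRep

/-- A walk of `G[Z]` joining two regions which meet `H_x` in different components of
`H_x ∩ H_Z`: it witnesses that `H_x ∪ H_Z` contains a cycle leaving and re-entering `H_x`. -/
structure IsDetour (f : V → H.Subgraph) (x : V) (Z : Set V) (w : G.Walk y z) : Prop where
  support_subset : ∀ v ∈ w.support, v ∈ Z
  exists_not_reachable : ∃ p ∈ (f x).verts ∩ (f y).verts, ∃ q ∈ (f x).verts ∩ (f z).verts,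
    ¬ ((f x).spanningCoe ⊓ regionUnion f Z).Reachable p q

lemma IsRegionRep.exists_isDetour (hrep : IsRegionRep G H f)
    (hx : (f x).spanningCoe.IsAcyclic) (hZ : (regionUnion f Z).IsAcyclic)
    (hxZ : ¬ (regionUnion f (insert x Z)).IsAcyclic) :
    ∃ (y z : V) (w : G.Walk y z), IsDetour f x Z w := by
  obtain ⟨p, ⟨p', hp⟩, q, ⟨q', hq⟩, hpq, hnot⟩ : ∃ p ∈ (f x).spanningCoe.support,
      ∃ q ∈ (f x).spanningCoe.support, (regionUnion f Z).Reachable p q ∧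
        ¬ ((f x).spanningCoe ⊓ regionUnion f Z).Reachable p q := by
    by_contra! h
    exact hxZ (regionUnion_insert (f := f) ▸ isAcyclic_sup hx hZ h)
  have hne : p ≠ q := by
    rintro rfl
    exact hnot .rfl
  obtain ⟨_, hadj⟩ := mem_support_of_reachable hne hpq
  obtain ⟨y, hyZ, hpy⟩ := regionUnion_adj.1 hadj
  obtain ⟨z, w, hqz, hw⟩ := hrep.exists_walk_of_reachable_regionUnion hpq hyZ hpy.fst_mem
  exact ⟨y, z, w, hw, p, ⟨(f x).edge_vert hp, hpy.fst_mem⟩, q, ⟨(f x).edge_vert hq, hqz⟩, hnot⟩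

namespace IsDetour

variable {w : G.Walk y z}

lemma of_support_subset (h : IsDetour f x Z w) {w' : G.Walk y z} (hw' : w'.support ⊆ w.support) :
    IsDetour f x Z w' :=
  ⟨fun v hv ↦ h.support_subset v (hw' hv), h.exists_not_reachable⟩

lemma takeUntil_or_dropUntil [DecidableEq V] (h : IsDetour f x Z w) {v : V} (hv : v ∈ w.support)
    (hxv : ((f x).verts ∩ (f v).verts).Nonempty) :
    IsDetour f x Z (w.takeUntil v hv) ∨ IsDetour f x Z (w.dropUntil v hv) := by
  obtain ⟨p, hp, q, hq, hpq⟩ := h.exists_not_reachable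
  obtain ⟨r, hr⟩ := hxv
  by_cases hpr : ((f x).spanningCoe ⊓ regionUnion f Z).Reachable p r
  · exact .inr ⟨fun t ht ↦ h.support_subset t (w.support_dropUntil_subset_support hv ht),
      r, hr, q, hq, fun hrq ↦ hpq (hpr.trans hrq)⟩
  · exact .inl ⟨fun t ht ↦ h.support_subset t (w.support_takeUntil_subset_support hv ht),
      p, hp, r, hr, hpr⟩

lemma two_le_length (h : IsDetour f x Z w) (hrep : IsRegionRep G H f) (h3 : RepAcyclic H f 3) :
    2 ≤ w.length := by
  classical
  by_contra! hlen
  obtain ⟨p, hp, q, hq, hpq⟩ := h.exists_not_reachable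
  have hends : ∀ v ∈ w.support, v ∈ ({y, z} : Set V) := by
    intro v hv
    obtain ⟨i, rfl, hi⟩ := Walk.mem_support_iff_exists_getVert.1 hv
    obtain rfl | rfl : i = 0 ∨ i = w.length := by omega
    all_goals simp
  have hac : ((f x).spanningCoe ⊔ regionUnion f {y, z}).IsAcyclic := by
    rw [← regionUnion_insert]
    simpa using h3.isAcyclic_regionUnion {x, y, z} Finset.card_le_three
  have hyz : {y, z} ⊆ Z := Set.pair_subset
    (h.support_subset y w.start_mem_support) (h.support_subset z w.end_mem_support)
  refine hpq (Reachable.mono (inf_le_inf_left _ (regionUnion_mono hyz)) ?_)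
  exact reachable_inf_of_isAcyclic_sup hac (hrep.reachable_spanningCoe hp.1 hq.1)
    (hrep.reachable_regionUnion_of_walk w hends hp.2 hq.2)

lemma isHolePath (h : IsDetour f x Z w) (hrep : IsRegionRep G H f) (h3 : RepAcyclic H f 3)
    (hx : x ∉ Z) (hmin : ∀ ⦃y' z' : V⦄ (w' : G.Walk y' z'), IsDetour f x Z w' →
      w.length ≤ w'.length) : IsHolePath x w := by
  classical
  have hxw : x ∉ w.support := fun hxw ↦ hx (h.support_subset x hxw)
  have hmin' : ∀ w' : G.Walk y z, w'.support ⊆ w.support → w.length ≤ w'.length :=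
    fun w' hw' ↦ hmin w' (h.of_support_subset hw')
  have hadj : ∀ v ∈ w.support, (G.Adj x v ↔ ((f x).verts ∩ (f v).verts).Nonempty) :=
    fun v hv ↦ hrep.2 x v (ne_of_mem_of_not_mem hv hxw).symm
  refine ⟨isPath_of_forall_length_le hmin', isChordless_of_forall_length_le hmin',
    h.two_le_length hrep h3, hxw, fun v hv ↦ ⟨fun hxv ↦ ?_, ?_⟩⟩
  · by_contra! hne
    obtain hw' | hw' := h.takeUntil_or_dropUntil hv ((hadj v hv).1 hxv)
    · exact (hmin _ hw').not_gt (Walk.length_takeUntil_lt_length hv hne.2)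
    · exact (hmin _ hw').not_gt (Walk.length_dropUntil_lt_length hv hne.1)
  · obtain ⟨p, hp, q, hq, -⟩ := h.exists_not_reachable
    rintro (rfl | rfl)
    exacts [(hadj _ hv).2 ⟨p, hp⟩, (hadj _ hv).2 ⟨q, hq⟩]

end IsDetour

lemma IsRegionRep.not_isAcyclic_regionUnion_of_isInducedCycleOn (hrep : IsRegionRep G H f)
    {X : Set V} {n : ℕ} (hX : IsInducedCycleOn G X n) (hn : 4 ≤ n) :
    ¬ (regionUnion f X).IsAcyclic := by
  obtain ⟨x, y, z, w, hw, rfl⟩ := hX.exists_isHolePath hn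
  exact hrep.not_isAcyclic_regionUnion_of_isHolePath hw

lemma IsRegionRep.exists_isInducedCycleOn_subset (hrep : IsRegionRep G H f)
    (h3 : RepAcyclic H f 3) (hY : ¬ (regionUnion f Y).IsAcyclic) :
    ∃ X ⊆ Y, ∃ n, 4 ≤ n ∧ IsInducedCycleOn G X n := by
  obtain ⟨Z, x, hxZ, hsub, hZ, hins⟩ := exists_isAcyclic_regionUnion_insert_not hY
  have hx : (f x).spanningCoe.IsAcyclic :=
    (h3.isAcyclic_regionUnion {x} (by simp)).anti (spanningCoe_le_regionUnion (by simp))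
  let IsDetourLength (k : ℕ) : Prop :=
    ∃ (y z : V) (w : G.Walk y z), IsDetour f x Z w ∧ w.length = k
  obtain ⟨_, ⟨y, z, w, hw, rfl⟩, hmin⟩ : ∃ k, Minimal IsDetourLength k := by
    obtain ⟨y, z, w, hw⟩ := hrep.exists_isDetour hx hZ hins
    exact exists_minimal_of_wellFoundedLT IsDetourLength ⟨_, y, z, w, hw, rfl⟩
  have hhole : IsHolePath x w := hw.isHolePath hrep h3 hxZ fun y' z' w' hw' ↦
    (le_total _ _).elim id (hmin ⟨y', z', w', hw', rfl⟩)
  refine ⟨_, ?_, w.length + 2, ?_, hhole.isInducedCycleOn⟩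
  · exact (Set.insert_subset_insert hw.support_subset).trans hsub
  · have := hhole.two_le_length
    omega

end RegionUnions

/-- for a 3-acyclic region representation, `G[X]` is an induced cycle of
length at least 4 iff `X` is inclusion-minimal such that `H_X` contains a cycle. -/
theorem stmt11 {V W : Type*} (G : SimpleGraph V) (H : SimpleGraph W) (f : V → H.Subgraph)
    (hrep : IsRegionRep G H f) (h3 : RepAcyclic H f 3) (X : Set V) :
    (∃ n, 4 ≤ n ∧ IsInducedCycleOn G X n) ↔
      (¬ (⨆ x ∈ X, f x).coe.IsAcyclic ∧
        ∀ Y : Set V, Y ⊂ X → (⨆ x ∈ Y, f x).coe.IsAcyclic) := by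
  simp only [isAcyclic_coe_iSup_iff]
  constructor
  · rintro ⟨n, hn, hX⟩
    refine ⟨hrep.not_isAcyclic_regionUnion_of_isInducedCycleOn hX hn, fun Y hY ↦ ?_⟩
    by_contra hcyc
    obtain ⟨C, hCY, m, -, hC⟩ := hrep.exists_isInducedCycleOn_subset h3 hcyc
    have hCX : C = X := hC.eq_of_subset hX (hCY.trans hY.subset)
    exact hY.not_subset (hCX ▸ hCY)
  · rintro ⟨hcyc, hmin⟩
    obtain ⟨C, hCX, n, hn, hC⟩ := hrep.exists_isInducedCycleOn_subset h3 hcyc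
    obtain rfl | hssub := hCX.eq_or_ssubset
    · exact ⟨n, hn, hC⟩
    · exact absurd (hmin C hssub) (hrep.not_isAcyclic_regionUnion_of_isInducedCycleOn hC hn)
end

section
/- Let G be a graph, r ≥ 1 an integer, and U a connected set of exactly r vertices of G. Then there is a vertex v ∈ U such that every u ∈ U has distance at most r/2 from v in G, and at most one u ∈ U has distance exactly r/2 from v. In particular, if r is odd, some v ∈ U has distance strictly less than r/2 from every u ∈ U. -/
open SimpleGraph

/-!
Work inside the graph induced on `U` and grow a set `s` of `n` vertices one adjacent vertex at a
time, from a single vertex to all of `U`, keeping a vertex `v` with all of `s` within `n / 2` and at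
most one vertex of `s` at distance exactly `n / 2`. When a neighbour `a` of `w ∈ s` is added, the
bound grows by `1 / 2`, so it suffices that `w` lies strictly within `n / 2` of `v`. If it does not,
then `n` is even and all other vertices of `s` are within `n / 2 - 1` of `v`; moving `v` one step
towards `w` brings `w` strictly within `n / 2` and pushes no vertex of `s` beyond `n / 2`.
-/

section

variable {V W : Type*} {G : SimpleGraph V} {H : SimpleGraph W}

theorem dist_map_le (f : G →g H) {u v : V} (huv : G.Reachable u v) :
    H.dist (f u) (f v) ≤ G.dist u v := by
  obtain ⟨p, hp⟩ := huv.exists_walk_length_eq_dist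
  calc H.dist (f u) (f v) ≤ (p.map f).length := dist_le _
    _ = G.dist u v := by rw [Walk.length_map, hp]

theorem exists_adj_dist_lt_of_dist_ne_zero {v w : V} (hvw : G.dist v w ≠ 0) :
    ∃ v', G.Adj v v' ∧ G.dist v' w < G.dist v w := by
  obtain ⟨p, hp⟩ := exists_walk_of_dist_ne_zero hvw
  cases p with
  | nil => exact absurd dist_self hvw
  | cons hadj q => exact ⟨_, hadj, (dist_le q).trans_lt (by simp [← hp])⟩

theorem exists_adj_mem_notMem (hG : G.Preconnected) {s : Set V} (hs : s.Nonempty)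
    (hs' : s ≠ Set.univ) : ∃ w ∈ s, ∃ a ∉ s, G.Adj w a := by
  obtain ⟨x, hx⟩ := hs
  obtain ⟨y, hy⟩ := (Set.ne_univ_iff_exists_notMem s).mp hs'
  obtain ⟨p⟩ := hG x y
  obtain ⟨d, -, hd, hd'⟩ := p.exists_boundary_dart s hx hy
  exact ⟨d.fst, hd, d.snd, hd', d.adj⟩

/-- `v` is a half-center of `s` at scale `n` if every vertex of `s` is at distance at most `n / 2`
from `v` and at most one is at distance exactly `n / 2`. Distances are those of the whole graph `G`
and `v` need not lie in `s`, so that `v` may move freely while `s` grows. -/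
structure IsHalfCenter (G : SimpleGraph V) (s : Set V) (n : ℕ) (v : V) : Prop where
  two_mul_dist_le : ∀ u ∈ s, 2 * G.dist v u ≤ n
  subsingleton : {u ∈ s | 2 * G.dist v u = n}.Subsingleton

namespace IsHalfCenter

variable {s : Set V} {n : ℕ} {v w a : V}

theorem singleton (v : V) : IsHalfCenter G {v} 1 v where
  two_mul_dist_le := by simp
  subsingleton := Set.subsingleton_singleton.anti (Set.sep_subset _ _)

theorem exists_two_mul_dist_lt (h : IsHalfCenter G s n v) (hn : n ≠ 0) (hw : w ∈ s) :
    ∃ v', (∀ u ∈ s, 2 * G.dist v' u ≤ n) ∧ 2 * G.dist v' w < n := by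
  obtain hlt | heq := (h.two_mul_dist_le w hw).lt_or_eq
  · exact ⟨v, h.two_mul_dist_le, hlt⟩
  obtain ⟨v', hadj, hlt⟩ := exists_adj_dist_lt_of_dist_ne_zero (G := G) (v := v) (w := w) (by lia)
  refine ⟨v', fun u hu ↦ ?_, by lia⟩
  obtain rfl | huw := eq_or_ne u w
  · lia
  have hle : 2 * G.dist v u ≤ n := h.two_mul_dist_le u hu
  have hne : 2 * G.dist v u ≠ n := fun he ↦ huw (h.subsingleton ⟨hu, he⟩ ⟨hw, heq⟩)
  have hstep : G.dist v' u ≤ 1 + G.dist v u := by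
    simpa only [dist_eq_one_iff_adj.mpr hadj.symm] using
      hadj.symm.reachable.dist_triangle_left u
  -- Both `n` and `2 * G.dist v u` are even, so the latter is at most `n - 2`.
  lia

theorem exists_insert (h : IsHalfCenter G s n v) (hn : n ≠ 0) (hw : w ∈ s) (hwa : G.Adj w a) :
    ∃ v', IsHalfCenter G (insert a s) (n + 1) v' := by
  obtain ⟨v', hle, hlt⟩ := h.exists_two_mul_dist_lt hn hw
  have hva : G.dist v' a ≤ G.dist v' w + 1 := by
    simpa only [dist_eq_one_iff_adj.mpr hwa] using hwa.reachable.dist_triangle_right v'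
  have eq_a : ∀ u ∈ insert a s, 2 * G.dist v' u = n + 1 → u = a := fun u hu he ↦
    hu.resolve_right fun hus ↦ by have := hle u hus; lia
  refine ⟨v', Set.forall_mem_insert.mpr ⟨by lia, fun u hu ↦ (hle u hu).trans n.le_succ⟩, ?_⟩
  exact fun u₁ h₁ u₂ h₂ ↦ (eq_a u₁ h₁.1 h₁.2).trans (eq_a u₂ h₂.1 h₂.2).symm

theorem image (h : IsHalfCenter G s n v) (hG : G.Preconnected) (f : G →g H) :
    IsHalfCenter H (f '' s) n (f v) where
  two_mul_dist_le := Set.forall_mem_image.mpr fun u hu ↦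
    (Nat.mul_le_mul_left 2 (dist_map_le f (hG v u))).trans (h.two_mul_dist_le u hu)
  subsingleton := by
    have dist_eq : ∀ u ∈ s, 2 * H.dist (f v) (f u) = n → 2 * G.dist v u = n := fun u hu he ↦
      (h.two_mul_dist_le u hu).antisymm (he ▸ Nat.mul_le_mul_left 2 (dist_map_le f (hG v u)))
    rintro _ ⟨⟨u₁, hu₁, rfl⟩, he₁⟩ _ ⟨⟨u₂, hu₂, rfl⟩, he₂⟩
    exact congrArg f (h.subsingleton ⟨hu₁, dist_eq u₁ hu₁ he₁⟩ ⟨hu₂, dist_eq u₂ hu₂ he₂⟩)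

theorem two_mul_dist_lt_of_odd (h : IsHalfCenter G s n v) (hn : Odd n) {u : V} (hu : u ∈ s) :
    2 * G.dist v u < n :=
  (h.two_mul_dist_le u hu).lt_of_ne fun he ↦ Nat.not_even_iff_odd.mpr hn (he ▸ even_two_mul _)

end IsHalfCenter

theorem exists_isHalfCenter_univ [Finite V] (hG : G.Connected) :
    ∃ v, IsHalfCenter G Set.univ (Nat.card V) v := by
  obtain ⟨x⟩ := hG.nonempty
  let S : Set (Set V) := {s | s.Nonempty ∧ ∃ v, IsHalfCenter G s s.ncard v}
  have hx : {x} ∈ S := ⟨Set.singleton_nonempty x, x, by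
    simpa only [Set.ncard_singleton] using IsHalfCenter.singleton x⟩
  obtain ⟨s, ⟨hs, v, hv⟩, hmax⟩ := S.toFinite.exists_maximal ⟨_, hx⟩
  suffices hsu : s = Set.univ by
    rw [hsu, Set.ncard_univ] at hv
    exact ⟨v, hv⟩
  by_contra hsu
  obtain ⟨w, hw, a, ha, hwa⟩ := exists_adj_mem_notMem hG.preconnected hs hsu
  have hins : insert a s ∈ S := ⟨Set.insert_nonempty a s, by
    simpa only [Set.ncard_insert_of_notMem ha] using
      hv.exists_insert (Set.ncard_ne_zero_of_mem hw) hw hwa⟩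
  exact ha (hmax hins (Set.subset_insert a s) (Set.mem_insert a s))

theorem exists_mem_isHalfCenter {s : Set V} [Finite s] (hs : (G.induce s).Connected) :
    ∃ v ∈ s, IsHalfCenter G s s.ncard v := by
  obtain ⟨v, hv⟩ := exists_isHalfCenter_univ hs
  refine ⟨v, v.2, ?_⟩
  have himage : (Embedding.induce (G := G) s).toHom '' Set.univ = s := Subtype.coe_image_univ s
  have himg := hv.image hs.preconnected (Embedding.induce s).toHom
  rwa [himage, Nat.card_coe_set_eq] at himg

end

/-- in a connected set `U` of exactly `r ≥ 1` vertices there is a vertex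
`v` of distance at most `r/2` from every vertex of `U`, with at most one vertex of `U`
at distance exactly `r/2` from `v`; if `r` is odd, all distances are below `r/2`. -/
theorem stmt14 {V : Type*} (G : SimpleGraph V) (r : ℕ) (hr : 1 ≤ r)
    (U : Finset V) (hcard : U.card = r)
    (hconn : (G.induce (↑U : Set V)).Connected) :
    ∃ v ∈ U, (∀ u ∈ U, G.Reachable v u ∧ 2 * G.dist v u ≤ r) ∧
      (∀ u₁ ∈ U, ∀ u₂ ∈ U, 2 * G.dist v u₁ = r → 2 * G.dist v u₂ = r → u₁ = u₂) ∧
      (Odd r → ∀ u ∈ U, 2 * G.dist v u < r) := by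
  obtain ⟨v, hvU, hv⟩ := exists_mem_isHalfCenter hconn
  rw [Set.ncard_coe_finset, hcard] at hv
  refine ⟨v, hvU, fun u hu ↦ ⟨?_, hv.two_mul_dist_le u hu⟩, ?_, ?_⟩
  · exact (hconn ⟨v, hvU⟩ ⟨u, hu⟩).map (Embedding.induce (U : Set V)).toHom
  · exact fun u₁ h₁ u₂ h₂ he₁ he₂ ↦ hv.subsingleton ⟨h₁, he₁⟩ ⟨h₂, he₂⟩
  · exact fun hodd u hu ↦ hv.two_mul_dist_lt_of_odd hodd hu
end
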